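/- In the difference field extension setting, let Φ be a quasi-polynomial of degree at most m with Φ(r) = trdeg_K L_r for all sufficiently large r. Then the coefficient of t^m in every constituent polynomial of Φ equals d/(m! · w_1 ⋯ w_m), where d is the σ-transcendence degree of L over K, i.e., the largest cardinality of a finite subset of L that is σ-algebraically independent over K. -/

import Mathlib

/-- The weighted order of `k ∈ ℕ^m`: `ord_w k = w₁k₁ + ⋯ + w_m k_m`. -/
def ordw {m : ℕ} (w : Fin m → ℕ) (k : Fin m → ℕ) : ℕ := ∑ i, w i * k i

/-- `τ^k = α₁^{k₁} ∘ ⋯ ∘ α_m^{k_m}` as a map `L → L`. -/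
noncomputable def tauApp {L : Type*} [Field L] {m : ℕ}
    (α : Fin m → (L →+* L)) (k : Fin m → ℕ) : L → L :=
  (List.ofFn fun i => (⇑(α i))^[k i]).foldr (· ∘ ·) id

/-- `L_r`: the subfield of `L` generated by `K` and all `τ^k η_i` with `ord_w k ≤ r`. -/
noncomputable def diffSubfield {L : Type*} [Field L] {m n : ℕ}
    (K : Subfield L) (α : Fin m → (L →+* L)) (w : Fin m → ℕ)
    (η : Fin n → L) (r : ℕ) : Subfield L :=
  Subfield.closure ((K : Set L) ∪
    {x | ∃ (k : Fin m → ℕ) (i : Fin n), ordw w k ≤ r ∧ x = tauApp α k (η i)})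

/-- The transcendence degree over `K` of a subfield `S` of `L` containing `K`. -/
noncomputable def trdegNat {L : Type*} [Field L] (K S : Subfield L) : ℕ :=
  sSup {d : ℕ | ∃ b : Fin d → L, (∀ i, b i ∈ S) ∧ AlgebraicIndependent K b}

/-- The `σ`-transcendence degree of `L` over `K`: the largest `d` such that there are
`b₁, …, b_d ∈ L` whose family of transforms `{τ^k b_j}` is algebraically independent
over `K`. -/
noncomputable def sigmaTrdeg {L : Type*} [Field L] {m : ℕ}
    (K : Subfield L) (α : Fin m → (L →+* L)) : ℕ :=
  sSup {d : ℕ | ∃ b : Fin d → L,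
    AlgebraicIndependent K (fun p : (Fin m → ℕ) × Fin d => tauApp α p.1 (b p.2))}


open Polynomial Filter Topology

/-! ### The transforms as ring endomorphisms -/

/-- `τ^k` as a ring endomorphism. -/
noncomputable def tauHom {L : Type*} [Field L] {m : ℕ}
    (α : Fin m → (L →+* L)) (k : Fin m → ℕ) : L →+* L :=
  (List.ofFn fun i => (α i) ^ (k i)).prod

theorem tauHom_apply {L : Type*} [Field L] {m : ℕ}
    (α : Fin m → (L →+* L)) (k : Fin m → ℕ) (x : L) : tauHom α k x = tauApp α k x := by
  unfold tauHom tauApp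
  induction m generalizing x with
  | zero => simp
  | succ m ih =>
    rw [List.ofFn_succ, List.ofFn_succ, List.prod_cons, List.foldr_cons, RingHom.mul_def,
      RingHom.comp_apply, ih (fun i => α i.succ) (fun i => k i.succ) x, RingHom.coe_pow]
    rfl

theorem ofFn_prod_mul {M : Type*} [Monoid M] {m : ℕ} (a : Fin m → M)
    (h : ∀ i j, Commute (a i) (a j)) (k l : Fin m → ℕ) :
    (List.ofFn fun i => (a i) ^ (k i + l i)).prod
      = (List.ofFn fun i => (a i) ^ (k i)).prod * (List.ofFn fun i => (a i) ^ (l i)).prod := by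
  induction m with
  | zero => simp
  | succ m ih =>
    simp only [List.ofFn_succ, List.prod_cons]
    rw [ih (fun i => a i.succ) (fun i j => h _ _) (fun i => k i.succ) (fun i => l i.succ), pow_add]
    have hc : Commute (a 0 ^ l 0) (List.ofFn fun i : Fin m => a i.succ ^ k i.succ).prod := by
      apply Commute.list_prod_right
      intro x hx
      obtain ⟨i, rfl⟩ := (List.mem_ofFn' _ _).1 hx
      exact (h _ _).pow_pow _ _
    simp only [mul_assoc]
    congr 1
    rw [← mul_assoc, ← mul_assoc, hc.eq]

theorem tauApp_add {L : Type*} [Field L] {m : ℕ}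
    (α : Fin m → (L →+* L)) (hcomm : ∀ i j, (α i).comp (α j) = (α j).comp (α i))
    (k l : Fin m → ℕ) (x : L) : tauApp α (k + l) x = tauApp α k (tauApp α l x) := by
  rw [← tauHom_apply, ← tauHom_apply, ← tauHom_apply, ← RingHom.comp_apply]
  exact congrArg (fun f : L →+* L => f x) (ofFn_prod_mul α hcomm k l)

theorem tauApp_mem {L : Type*} [Field L] {m : ℕ} (K : Subfield L)
    (α : Fin m → (L →+* L)) (hK : ∀ i, ∀ x ∈ K, α i x ∈ K) (k : Fin m → ℕ) (x : L) (hx : x ∈ K) :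
    tauApp α k x ∈ K := by
  rw [← tauHom_apply]
  unfold tauHom
  induction m generalizing x with
  | zero => simpa
  | succ m ih =>
    rw [List.ofFn_succ, List.prod_cons, RingHom.mul_def, RingHom.comp_apply, RingHom.coe_pow]
    have h1 := ih (fun i => α i.succ) (fun i => hK _) (fun i => k i.succ) x hx
    generalize ((List.ofFn fun i : Fin m => α i.succ ^ k i.succ).prod) x = y at h1 ⊢
    generalize k 0 = c
    induction c with
    | zero => simpa
    | succ c ihc => rw [Function.iterate_succ_apply']; exact hK _ _ ihc

theorem ordw_add {m : ℕ} (w k l : Fin m → ℕ) : ordw w (k + l) = ordw w k + ordw w l := by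
  simp [ordw, mul_add, Finset.sum_add_distrib]

/-! ### Counting -/

/-- The finite set of `k` of weighted order at most `r`. -/
def ordBall {m : ℕ} (w : Fin m → ℕ) (r : ℕ) : Finset (Fin m → ℕ) :=
  (Fintype.piFinset fun _ => Finset.range (r + 1)).filter fun k => ordw w k ≤ r

theorem mem_ordBall {m : ℕ} {w : Fin m → ℕ} (hw : ∀ i, 0 < w i) {r : ℕ} {k : Fin m → ℕ} :
    k ∈ ordBall w r ↔ ordw w k ≤ r := by
  simp only [ordBall, Finset.mem_filter, Fintype.mem_piFinset, Finset.mem_range,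
    and_iff_right_iff_imp]
  intro h i
  have h1 : w i * k i ≤ ordw w k :=
    Finset.single_le_sum (f := fun i => w i * k i) (fun _ _ => Nat.zero_le _) (Finset.mem_univ i)
  have := hw i
  nlinarith

theorem ordBall_mono {m : ℕ} {w : Fin m → ℕ} (hw : ∀ i, 0 < w i) {r s : ℕ} (h : r ≤ s) :
    ordBall w r ⊆ ordBall w s := by
  intro k hk
  rw [mem_ordBall hw] at *
  omega

theorem ordBall_succ_card {m : ℕ} (w : Fin (m + 1) → ℕ) (hw : ∀ i, 0 < w i) (r : ℕ) :
    (ordBall w r).card = (ordBall (fun i : Fin m => w i.succ) r).card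
      + if w 0 ≤ r then (ordBall w (r - w 0)).card else 0 := by
  rw [← Finset.card_filter_add_card_filter_not (s := ordBall w r) (fun k => k 0 = 0)]
  congr 1
  · symm
    apply Finset.card_bij (fun k _ => (Fin.cons 0 k : Fin (m+1) → ℕ))
    · intro k hk
      rw [mem_ordBall (fun i => hw _)] at hk
      simp only [Finset.mem_filter, mem_ordBall hw, Fin.cons_zero, and_true]
      simpa [ordw, Fin.sum_univ_succ] using hk
    · intro a _ b _ h
      exact Fin.cons_right_injective _ h
    · intro b hb
      simp only [Finset.mem_filter, mem_ordBall hw] at hb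
      refine ⟨fun i => b i.succ, ?_, ?_⟩
      · rw [mem_ordBall (fun i => hw _)]
        simpa [ordw, Fin.sum_univ_succ, hb.2] using hb.1
      · rw [← hb.2]; exact Fin.cons_self_tail b
  · have hs : ordw w (Pi.single 0 1) = w 0 := by
      simp [ordw, Pi.single_apply]
    split_ifs with h
    · symm
      apply Finset.card_bij (fun k _ => k + Pi.single 0 1)
      · intro k hk
        rw [mem_ordBall hw] at hk
        simp only [Finset.mem_filter, mem_ordBall hw, ordw_add, hs]
        refine ⟨by omega, by simp⟩
      · intro a _ b _ h
        exact add_right_cancel h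
      · intro b hb
        simp only [Finset.mem_filter, mem_ordBall hw] at hb
        have hb' : b - Pi.single 0 1 + Pi.single 0 1 = b := by
          funext i
          by_cases hi : i = 0
          · subst hi; simp; omega
          · simp [hi]
        refine ⟨b - Pi.single 0 1, ?_, hb'⟩
        rw [mem_ordBall hw]
        have := ordw_add w (b - Pi.single 0 1) (Pi.single 0 1)
        rw [hb', hs] at this
        omega
    · rw [Finset.card_eq_zero, Finset.filter_eq_empty_iff]
      intro k hk h0
      rw [mem_ordBall hw] at hk
      have h1 : w 0 * k 0 ≤ ordw w k :=
        Finset.single_le_sum (f := fun i => w i * k i) (fun _ _ => Nat.zero_le _)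
          (Finset.mem_univ 0)
      have : 0 < k 0 := Nat.pos_of_ne_zero h0
      nlinarith

/-- A Bernoulli-type inequality. -/
theorem pow_sub_le_aux (x y : ℚ) (hx : 0 ≤ x) (hy : 0 ≤ y) (m : ℕ) :
    (m + 1) * y * x ^ m + x ^ (m + 1) ≤ (x + y) ^ (m + 1) := by
  induction m with
  | zero => simp; linarith
  | succ m ih =>
    have h1 := mul_le_mul_of_nonneg_right ih (add_nonneg hx hy)
    have h2 : 0 ≤ (m + 1) * y * x ^ m * y := by positivity
    rw [pow_succ (x + y)]
    push_cast
    refine le_trans ?_ h1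
    have : ((m + 1) * y * x ^ m + x ^ (m + 1)) * (x + y)
      = ((m + 1) * y * x ^ m * y) + ((m + 1 + 1) * y * x ^ (m + 1) + x ^ (m + 1 + 1)) := by ring
    rw [this]
    linarith

theorem pow_sub_le_aux' (x y : ℚ) (hx : 0 ≤ x) (hy : 0 ≤ y) (m : ℕ) :
    (x + y) ^ (m + 1) ≤ (m + 1) * y * (x + y) ^ m + x ^ (m + 1) := by
  induction m with
  | zero => simp; linarith
  | succ m ih =>
    have h1 := mul_le_mul_of_nonneg_right ih (add_nonneg hx hy)
    have h2 : x ^ (m + 1) ≤ (x + y) ^ (m + 1) := by gcongr; linarith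
    have h3 := mul_le_mul_of_nonneg_right h2 hy
    rw [pow_succ (x + y)]
    push_cast
    refine le_trans h1 ?_
    have e1 : ((m + 1) * y * (x + y) ^ m + x ^ (m + 1)) * (x + y)
      = (m + 1) * y * (x + y) ^ (m + 1) + x ^ (m + 1 + 1) + x ^ (m + 1) * y := by ring
    rw [e1]
    linarith

theorem ordBall_card_bounds {m : ℕ} (w : Fin m → ℕ) (hw : ∀ i, 0 < w i) (r : ℕ) :
    (r : ℚ) ^ m ≤ ((m.factorial : ℚ) * ∏ j, (w j : ℚ)) * ((ordBall w r).card : ℚ) ∧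
    ((m.factorial : ℚ) * ∏ j, (w j : ℚ)) * ((ordBall w r).card : ℚ)
      ≤ ((r : ℚ) + ∑ j, (w j : ℚ)) ^ m := by
  induction m generalizing r with
  | zero =>
    have : (ordBall w r).card = 1 := by
      rw [Finset.card_eq_one]
      refine ⟨0, ?_⟩
      ext k
      rw [mem_ordBall hw]
      simp [ordw, Subsingleton.elim k 0]
    simp [this]
  | succ m ih =>
    induction r using Nat.strong_induction_on with
    | _ r ihr =>
      obtain ⟨l1, u1⟩ := ih (fun i => w i.succ) (fun i => hw _) r
      have hrec := ordBall_succ_card w hw r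
      rw [Fin.prod_univ_succ, Fin.sum_univ_succ] at *
      set P : ℚ := ∏ j : Fin m, (w j.succ : ℚ) with hP
      set S : ℚ := ∑ j : Fin m, (w j.succ : ℚ) with hS
      have hS0 : 0 ≤ S := Finset.sum_nonneg fun _ _ => by positivity
      have hP0 : 0 ≤ P := Finset.prod_nonneg fun _ _ => by positivity
      set C : ℚ := ((ordBall (fun i : Fin m => w i.succ) r).card : ℚ) with hC
      have hw0 : (0 : ℚ) < w 0 := by exact_mod_cast hw 0
      have hf : (((m + 1).factorial : ℕ) : ℚ) = (m + 1) * m.factorial := by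
        rw [Nat.factorial_succ]; push_cast; ring
      have hu := pow_sub_le_aux ((r : ℚ) + S) (w 0) (by positivity) hw0.le m
      have l1' := mul_le_mul_of_nonneg_left l1 (show (0 : ℚ) ≤ (m + 1) * w 0 by positivity)
      have u1' := mul_le_mul_of_nonneg_left u1 (show (0 : ℚ) ≤ (m + 1) * w 0 by positivity)
      by_cases h : w 0 ≤ r
      · rw [if_pos h] at hrec
        obtain ⟨l2, u2⟩ := ihr (r - w 0) (by have := hw 0; omega)
        rw [hrec, hf]
        rw [hf] at l2 u2
        push_cast [Nat.cast_sub h] at l2 u2 ⊢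
        set D : ℚ := ((ordBall w (r - w 0)).card : ℚ)
        have hl := pow_sub_le_aux' ((r : ℚ) - w 0) (w 0)
          (by rw [sub_nonneg]; exact_mod_cast h) hw0.le m
        rw [sub_add_cancel] at hl
        have e : (r : ℚ) - w 0 + (w 0 + S) = r + S := by ring
        rw [e] at u2
        have e2 : (r : ℚ) + (w 0 + S) = r + S + w 0 := by ring
        rw [e2]
        constructor <;> nlinarith
      · rw [if_neg h] at hrec
        rw [hrec, hf, add_zero]
        have hrw : (r : ℚ) ≤ w 0 := by exact_mod_cast (not_le.1 h).le
        have e2 : (r : ℚ) + (w 0 + S) = r + S + w 0 := by ring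
        have h3 : (0 : ℚ) ≤ (r + S) ^ (m + 1) := by positivity
        have h4 : (r : ℚ) ^ (m + 1) ≤ (m + 1) * w 0 * r ^ m := by
          rw [pow_succ']
          apply mul_le_mul_of_nonneg_right _ (by positivity)
          have : (0 : ℚ) ≤ m * w 0 := by positivity
          linarith
        rw [e2]
        constructor <;> nlinarith

theorem ordBall_card_tendsto {m : ℕ} (w : Fin m → ℕ) (hw : ∀ i, 0 < w i)
    (f : ℕ → ℕ) (hf : Tendsto (fun r : ℕ => (f r : ℚ) / r) atTop (𝓝 1)) :
    Tendsto (fun r : ℕ => ((ordBall w (f r)).card : ℚ) / (r : ℚ) ^ m) atTop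
      (𝓝 (1 / ((m.factorial : ℚ) * ∏ j, (w j : ℚ)))) := by
  set c : ℚ := (m.factorial : ℚ) * ∏ j, (w j : ℚ) with hc
  have hc0 : 0 < c := by
    apply mul_pos (by positivity)
    exact Finset.prod_pos fun i _ => by exact_mod_cast hw i
  set S : ℚ := ∑ j, (w j : ℚ)
  have h0 : Tendsto (fun r : ℕ => S / (r : ℚ)) atTop (𝓝 0) :=
    tendsto_const_nhds.div_atTop tendsto_natCast_atTop_atTop
  have hlo : Tendsto (fun r : ℕ => ((f r : ℚ) / r) ^ m / c) atTop (𝓝 (1 / c)) := by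
    simpa using (hf.pow m).div_const c
  have hhi : Tendsto (fun r : ℕ => ((f r : ℚ) / r + S / r) ^ m / c) atTop (𝓝 (1 / c)) := by
    simpa using ((hf.add h0).pow m).div_const c
  refine tendsto_of_tendsto_of_tendsto_of_le_of_le hlo hhi ?_ ?_
  · intro r
    have := (ordBall_card_bounds w hw (f r)).1
    simp only [div_pow]
    rw [div_right_comm]
    gcongr
    rw [div_le_iff₀ hc0]
    linarith
  · intro r
    have := (ordBall_card_bounds w hw (f r)).2
    simp only [← add_div, div_pow]
    rw [div_right_comm]
    gcongr
    rw [le_div_iff₀ hc0]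
    linarith

theorem tendsto_shift_add (a : ℕ) :
    Tendsto (fun r : ℕ => ((r + a : ℕ) : ℚ) / r) atTop (𝓝 1) := by
  have h0 : Tendsto (fun r : ℕ => (a : ℚ) / (r : ℚ)) atTop (𝓝 0) :=
    tendsto_const_nhds.div_atTop tendsto_natCast_atTop_atTop
  have h1 : Tendsto (fun r : ℕ => 1 + (a : ℚ) / (r : ℚ)) atTop (𝓝 1) := by
    simpa using h0.const_add 1
  refine h1.congr' ?_
  filter_upwards [eventually_gt_atTop 0] with r hr
  have : (r : ℚ) ≠ 0 := by positivity
  push_cast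
  field_simp

theorem tendsto_shift_sub (a : ℕ) :
    Tendsto (fun r : ℕ => ((r - a : ℕ) : ℚ) / r) atTop (𝓝 1) := by
  have h0 : Tendsto (fun r : ℕ => (a : ℚ) / (r : ℚ)) atTop (𝓝 0) :=
    tendsto_const_nhds.div_atTop tendsto_natCast_atTop_atTop
  have h1 : Tendsto (fun r : ℕ => 1 - (a : ℚ) / (r : ℚ)) atTop (𝓝 1) := by
    simpa using h0.const_sub 1
  refine h1.congr' ?_
  filter_upwards [eventually_gt_atTop 0, eventually_ge_atTop a] with r hr ha
  have : (r : ℚ) ≠ 0 := by positivity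
  push_cast [Nat.cast_sub ha]
  field_simp

/-- The limit of `g(r)/r^m` along a residue class. -/
theorem poly_tendsto (g : ℚ[X]) (m : ℕ) (hg : g.natDegree ≤ m) :
    Tendsto (fun x : ℚ => g.eval x / x ^ m) atTop (𝓝 (g.coeff m)) := by
  have h1 : Tendsto (fun x : ℚ => ∑ j ∈ Finset.range (m + 1), g.coeff j * x ^ j / x ^ m) atTop
      (𝓝 (∑ j ∈ Finset.range (m + 1), if j = m then g.coeff m else 0)) := by
    apply tendsto_finsetSum
    intro j hj
    split_ifs with h
    · subst h
      refine tendsto_const_nhds.congr' ?_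
      filter_upwards [eventually_gt_atTop 0] with x hx
      field_simp
    · have hlt : j < m := by have := Finset.mem_range.1 hj; omega
      have := (tendsto_pow_div_pow_atTop_zero (𝕜 := ℚ) hlt).const_mul (g.coeff j)
      simpa [mul_div_assoc] using this
  simp only [Finset.sum_ite_eq', Finset.mem_range, Nat.lt_succ_self, if_true] at h1
  refine h1.congr fun x => ?_
  rw [Polynomial.eval_eq_sum_range' (Nat.lt_succ_of_le hg), Finset.sum_div]

/-! ### Matroid facts -/

/-- The algebraic matroid of `L` over `K`. -/
noncomputable abbrev algMat {L : Type*} [Field L] (K : Subfield L) : Matroid L :=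
  AlgebraicIndependent.matroid K L

theorem mem_algMat_closure_iff {L : Type*} [Field L] (K : Subfield L) (A : Set L) (x : L) :
    x ∈ (algMat K).closure A ↔ IsAlgebraic (Algebra.adjoin K A) x := by
  rw [algMat, AlgebraicIndependent.matroid_closure_eq]
  rfl

theorem map_mem_algMat_closure {L : Type*} [Field L] (K : Subfield L) (f : L →+* L)
    (hf : ∀ x ∈ K, f x ∈ K) (A : Set L) (x : L) (hx : x ∈ (algMat K).closure A) :
    f x ∈ (algMat K).closure (f '' A) := by
  rw [mem_algMat_closure_iff] at *
  have key : ∀ y ∈ Algebra.adjoin K A, f y ∈ Algebra.adjoin K (f '' A) := by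
    intro y hy
    induction hy using Algebra.adjoin_induction with
    | mem y hy => exact Algebra.subset_adjoin ⟨y, hy, rfl⟩
    | algebraMap r =>
      exact (Algebra.adjoin K (f '' A)).algebraMap_mem ⟨f r, hf r r.2⟩
    | add a b _ _ ha hb => rw [map_add]; exact add_mem ha hb
    | mul a b _ _ ha hb => rw [map_mul]; exact mul_mem ha hb
  let F : Algebra.adjoin K A →+* Algebra.adjoin K (f '' A) :=
    (f.comp (Algebra.adjoin K A).val.toRingHom).codRestrict (Algebra.adjoin K (f '' A))
      (fun y => key y y.2)
  have hF : Function.Injective F := by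
    intro a b hab
    have : f (a : L) = f (b : L) := congrArg Subtype.val hab
    exact Subtype.ext (f.injective this)
  obtain ⟨p, hp, hp0⟩ := hx
  refine ⟨p.map F, (Polynomial.map_ne_zero_iff hF).2 hp, ?_⟩
  rw [Polynomial.aeval_def, Polynomial.eval₂_map]
  have : (algebraMap (Algebra.adjoin K (f '' A)) L).comp F
      = f.comp (algebraMap (Algebra.adjoin K A) L) := rfl
  rw [this, ← Polynomial.hom_eval₂, ← Polynomial.aeval_def, hp0, map_zero]

theorem subfield_closure_subset {L : Type*} [Field L] (K : Subfield L) (S : Set L) (B : Set L)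
    (hB : S ⊆ (algMat K).closure B) :
    ((Subfield.closure ((K : Set L) ∪ S) : Subfield L) : Set L) ⊆ (algMat K).closure B := by
  intro x hx
  have hx' : x ∈ Subfield.closure ((K : Set L) ∪ S) := hx
  clear hx
  rw [mem_algMat_closure_iff]
  induction hx' using Subfield.closure_induction with
  | mem x h =>
    rcases h with h | h
    · exact isAlgebraic_algebraMap (⟨x, (Algebra.adjoin K B).algebraMap_mem ⟨x, h⟩⟩ :
        Algebra.adjoin K B)
    · exact (mem_algMat_closure_iff K B x).1 (hB h)
  | one => exact isAlgebraic_one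
  | add x y hx hy h1 h2 => exact h1.add h2
  | neg x hx h1 => exact h1.neg
  | inv x hx h1 => exact h1.inv
  | mul x y hx hy h1 h2 => exact h1.mul h2

theorem card_le_of_subset_closure {L : Type*} [Field L] (K S : Subfield L) (G : Finset L)
    (hS : (S : Set L) ⊆ (algMat K).closure (G : Set L)) (d : ℕ) (b : Fin d → L)
    (hb : ∀ i, b i ∈ S) (hi : AlgebraicIndependent K b) : d ≤ G.card := by
  have h1 : (algMat K).Indep (Set.range b) :=
    AlgebraicIndependent.matroid_indep_iff.2 hi.to_subtype_range
  have h2 : Set.range b ⊆ (algMat K).closure (G : Set L) := by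
    rintro _ ⟨i, rfl⟩; exact hS (hb i)
  have h3 := h1.encard_le_eRk_of_subset h2
  rw [Matroid.eRk_closure_eq] at h3
  have h4 := h3.trans (Matroid.eRk_le_encard _ _)
  rw [Set.encard_coe_eq_coe_finsetCard, ← Set.image_univ, hi.injective.encard_image,
    Set.encard_univ, ENat.card_eq_coe_fintype_card, Fintype.card_fin] at h4
  exact_mod_cast h4

theorem trdegNat_le {L : Type*} [Field L] (K S : Subfield L) (G : Finset L)
    (hS : (S : Set L) ⊆ (algMat K).closure (G : Set L)) : trdegNat K S ≤ G.card := by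
  apply csSup_le'
  rintro d ⟨b, hb, hi⟩
  exact card_le_of_subset_closure K S G hS d b hb hi

theorem le_trdegNat {L : Type*} [Field L] (K S : Subfield L) (G : Finset L)
    (hS : (S : Set L) ⊆ (algMat K).closure (G : Set L)) {ι : Type*} (t : Finset ι)
    (x : ι → L) (hx : ∀ i ∈ t, x i ∈ S) (hi : AlgebraicIndependent K x) :
    t.card ≤ trdegNat K S := by
  apply le_csSup
  · refine ⟨G.card, ?_⟩
    rintro d ⟨b, hb, hi⟩
    exact card_le_of_subset_closure K S G hS d b hb hi
  · refine ⟨fun i => x (t.equivFin.symm i), fun i => hx _ (t.equivFin.symm i).2, ?_⟩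
    exact hi.comp (fun i : Fin t.card => ((t.equivFin.symm i : t) : ι))
      (Subtype.val_injective.comp t.equivFin.symm.injective)

/-! ### The monomial order -/

/-- Monomial order key: first the weighted order, then lexicographic. -/
def keyw {m : ℕ} (w : Fin m → ℕ) (k : Fin m → ℕ) : ℕ ×ₗ Lex (Fin m → ℕ) :=
  toLex (ordw w k, toLex k)

theorem keyw_injective {m : ℕ} (w : Fin m → ℕ) : Function.Injective (keyw w) := by
  intro a b h
  have h1 : (ordw w a, toLex a) = (ordw w b, toLex b) := toLex.injective h
  exact toLex.injective (Prod.mk.inj h1).2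

theorem keyw_lt_iff {m : ℕ} (w : Fin m → ℕ) (a b : Fin m → ℕ) :
    keyw w a < keyw w b ↔ ordw w a < ordw w b ∨ ordw w a = ordw w b ∧ toLex a < toLex b :=
  Prod.Lex.toLex_lt_toLex

theorem keyw_add_lt {m : ℕ} (w : Fin m → ℕ) {a b : Fin m → ℕ} (h : keyw w a < keyw w b)
    (s : Fin m → ℕ) : keyw w (a + s) < keyw w (b + s) := by
  rw [keyw_lt_iff] at *
  rw [ordw_add, ordw_add]
  rcases h with h | ⟨h1, h2⟩
  · left; omega
  · right
    refine ⟨by omega, ?_⟩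
    rw [toLex_add, toLex_add]
    exact add_lt_add_left h2 _

theorem ordw_le_of_keyw_lt {m : ℕ} (w : Fin m → ℕ) {a b : Fin m → ℕ} (h : keyw w a < keyw w b) :
    ordw w a ≤ ordw w b := by
  rw [keyw_lt_iff] at h
  omega

/-! ### The leading relations -/

/-- The family of all transforms of the generators. -/
noncomputable def genFam {L : Type*} [Field L] {m n : ℕ} (α : Fin m → (L →+* L)) (η : Fin n → L)
    (p : (Fin m → ℕ) × Fin n) : L := tauApp α p.1 (η p.2)

theorem exists_leading {L : Type*} [Field L] {m n : ℕ} (K : Subfield L)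
    (α : Fin m → (L →+* L)) (w : Fin m → ℕ) (η : Fin n → L) (J : Finset (Fin n)) (j : Fin n)
    (hJ : AlgebraicIndepOn K (genFam α η) {p | p.2 ∈ J})
    (hj : ¬ AlgebraicIndepOn K (genFam α η) {p | p.2 ∈ insert j J}) :
    ∃ k, genFam α η (k, j) ∈ (algMat K).closure
      (genFam α η '' ({p | p.2 ∈ J} ∪ {p | p.2 = j ∧ keyw w p.1 < keyw w k})) := by
  by_contra! hcon
  apply hj
  have step : ∀ t : Finset (Fin m → ℕ),
      AlgebraicIndepOn K (genFam α η) ({p | p.2 ∈ J} ∪ {p | p.2 = j ∧ p.1 ∈ t}) := by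
    intro t
    induction t using Finset.induction_on_max_value (keyw w) with
    | empty => simpa using hJ
    | insert a t ha hmax ih =>
      have e : {p : (Fin m → ℕ) × Fin n | p.2 ∈ J} ∪ {p | p.2 = j ∧ p.1 ∈ insert a t}
          = insert (a, j) ({p | p.2 ∈ J} ∪ {p | p.2 = j ∧ p.1 ∈ t}) := by
        ext ⟨k, i⟩
        simp only [Set.mem_union, Set.mem_ofPred_eq, Finset.mem_insert, Set.mem_insert_iff,
          Prod.mk.injEq]
        tauto
      rw [e]
      apply ih.insert
      intro halg
      apply hcon a
      rw [← mem_algMat_closure_iff] at halg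
      refine (algMat K).closure_subset_closure (Set.image_mono ?_) halg
      apply Set.union_subset_union_right
      rintro ⟨k, i⟩ ⟨h1, h2⟩
      refine ⟨h1, lt_of_le_of_ne (hmax _ h2) ?_⟩
      intro h
      exact ha (keyw_injective w h ▸ h2)
  apply algebraicIndependent_of_finite_type
  intro t ht
  have hfin : ((fun p : {p : (Fin m → ℕ) × Fin n | p.2 ∈ insert j J} => p.1.1) '' t).Finite :=
    ht.image _
  have h1 := step hfin.toFinset
  let F : t → ↥({p : (Fin m → ℕ) × Fin n | p.2 ∈ J} ∪ {p | p.2 = j ∧ p.1 ∈ hfin.toFinset}) :=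
    fun x => ⟨x.1.1, by
      have hx : x.1.1.2 ∈ insert j J := x.1.2
      rcases Finset.mem_insert.1 hx with h | h
      · right
        refine ⟨h, ?_⟩
        rw [Set.Finite.mem_toFinset]
        exact ⟨x.1, x.2, rfl⟩
      · left; exact h⟩
  refine AlgebraicIndependent.comp h1 F ?_
  intro x y hxy
  have : x.1.1 = y.1.1 := congrArg (fun z => z.1) hxy
  exact Subtype.ext (Subtype.ext this)

theorem exists_leading_bdd {L : Type*} [Field L] {m n : ℕ} (K : Subfield L)
    (α : Fin m → (L →+* L)) (w : Fin m → ℕ) (η : Fin n → L) (J : Finset (Fin n)) (j : Fin n)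
    (hJ : AlgebraicIndepOn K (genFam α η) {p | p.2 ∈ J})
    (hj : ¬ AlgebraicIndepOn K (genFam α η) {p | p.2 ∈ insert j J}) :
    ∃ k c, genFam α η (k, j) ∈ (algMat K).closure
      (genFam α η '' ({p | p.2 ∈ J ∧ ordw w p.1 ≤ c}
        ∪ {p | p.2 = j ∧ keyw w p.1 < keyw w k})) := by
  obtain ⟨k, hk⟩ := exists_leading K α w η J j hJ hj
  obtain ⟨I, hI, hIf, -, hmem⟩ := Matroid.exists_mem_finite_closure_of_mem_closure hk
  obtain ⟨A, hA, hAf, hAI⟩ := (Set.exists_subset_image_finite_and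
    (p := fun I => genFam α η (k, j) ∈ (algMat K).closure I)).1 ⟨I, hI, hIf, hmem⟩
  refine ⟨k, hAf.toFinset.sup (fun p => ordw w p.1), ?_⟩
  refine (algMat K).closure_subset_closure (Set.image_mono ?_) hAI
  intro p hp
  rcases hA hp with h | h
  · left
    exact ⟨h, Finset.le_sup (f := fun p : (Fin m → ℕ) × Fin n => ordw w p.1)
      (hAf.mem_toFinset.2 hp)⟩
  · right; exact h

theorem leading_shift {L : Type*} [Field L] {m n : ℕ} (K : Subfield L)
    (α : Fin m → (L →+* L)) (hcomm : ∀ i j, (α i).comp (α j) = (α j).comp (α i))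
    (hK : ∀ i, ∀ x ∈ K, α i x ∈ K)
    (w : Fin m → ℕ) (η : Fin n → L) (J : Finset (Fin n)) (j : Fin n) (k : Fin m → ℕ) (c : ℕ)
    (h : genFam α η (k, j) ∈ (algMat K).closure
      (genFam α η '' ({p | p.2 ∈ J ∧ ordw w p.1 ≤ c}
        ∪ {p | p.2 = j ∧ keyw w p.1 < keyw w k}))) (s : Fin m → ℕ) :
    genFam α η (k + s, j) ∈ (algMat K).closure
      (genFam α η '' ({p | p.2 ∈ J ∧ ordw w p.1 ≤ c + ordw w s}
        ∪ {p | p.2 = j ∧ keyw w p.1 < keyw w (k + s)})) := by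
  have hs : ∀ p : (Fin m → ℕ) × Fin n,
      tauHom α s (genFam α η p) = genFam α η (p.1 + s, p.2) := by
    intro p
    rw [tauHom_apply, genFam, genFam, ← tauApp_add α hcomm, add_comm]
  have h1 := map_mem_algMat_closure K (tauHom α s)
    (fun x hx => by rw [tauHom_apply]; exact tauApp_mem K α hK s x hx) _ _ h
  rw [hs] at h1
  refine (algMat K).closure_subset_closure ?_ h1
  rintro _ ⟨_, ⟨p, hp, rfl⟩, rfl⟩
  refine ⟨(p.1 + s, p.2), ?_, (hs p).symm⟩
  rcases hp with ⟨h1, h2⟩ | ⟨h1, h2⟩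
  · left
    refine ⟨h1, ?_⟩
    simp only [ordw_add]
    omega
  · right
    exact ⟨h1, keyw_add_lt w h2 s⟩

theorem spanning_step {L : Type*} [Field L] {m n : ℕ} (K : Subfield L)
    (α : Fin m → (L →+* L)) (hcomm : ∀ i j, (α i).comp (α j) = (α j).comp (α i))
    (hK : ∀ i, ∀ x ∈ K, α i x ∈ K)
    (w : Fin m → ℕ) (η : Fin n → L) (J : Finset (Fin n)) (j : Fin n) (k : Fin m → ℕ) (c : ℕ)
    (h : genFam α η (k, j) ∈ (algMat K).closure
      (genFam α η '' ({p | p.2 ∈ J ∧ ordw w p.1 ≤ c}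
        ∪ {p | p.2 = j ∧ keyw w p.1 < keyw w k}))) (r : ℕ) (l : Fin m → ℕ)
    (hl : ordw w l ≤ r) :
    genFam α η (l, j) ∈ (algMat K).closure
      (genFam α η '' ({p | p.2 ∈ J ∧ ordw w p.1 ≤ r + c}
        ∪ {p | p.2 = j ∧ ordw w p.1 ≤ r ∧ ¬ k ≤ p.1})) := by
  have hwf : WellFounded (fun a b : Fin m → ℕ => keyw w a < keyw w b) :=
    InvImage.wf (keyw w) wellFounded_lt
  induction l using hwf.induction with
  | _ l ih =>
    set B := (genFam α η '' ({p | p.2 ∈ J ∧ ordw w p.1 ≤ r + c}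
        ∪ {p | p.2 = j ∧ ordw w p.1 ≤ r ∧ ¬ k ≤ p.1})) with hB
    by_cases hkl : k ≤ l
    · obtain ⟨s, rfl⟩ := exists_add_of_le hkl
      have h1 := leading_shift K α hcomm hK w η J j k c h s
      have h2 : (genFam α η '' ({p | p.2 ∈ J ∧ ordw w p.1 ≤ c + ordw w s}
        ∪ {p | p.2 = j ∧ keyw w p.1 < keyw w (k + s)})) ⊆ (algMat K).closure B := by
        rintro _ ⟨⟨a, i⟩, ⟨h3, h4⟩ | ⟨h3, h4⟩, rfl⟩
        · apply (algMat K).mem_closure_of_mem _ (Set.subset_univ _)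
          refine ⟨(a, i), Or.inl ⟨h3, ?_⟩, rfl⟩
          rw [ordw_add] at hl
          simp only at h4 ⊢
          omega
        · obtain rfl : i = j := h3
          exact ih a h4 ((ordw_le_of_keyw_lt w h4).trans hl)
      exact Matroid.closure_subset_closure_of_subset_closure h2 h1
    · apply (algMat K).mem_closure_of_mem _ (Set.subset_univ _)
      exact ⟨(l, j), Or.inr ⟨rfl, hl, hkl⟩, rfl⟩

/-! ### Fields `L_r` -/

theorem diffSubfield_mono {L : Type*} [Field L] {m n : ℕ}
    (K : Subfield L) (α : Fin m → (L →+* L)) (w : Fin m → ℕ)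
    (η : Fin n → L) {r s : ℕ} (h : r ≤ s) : diffSubfield K α w η r ≤ diffSubfield K α w η s := by
  apply Subfield.closure_mono
  apply Set.union_subset_union_right
  rintro x ⟨k, i, h1, h2⟩
  exact ⟨k, i, h1.trans h, h2⟩

theorem exists_mem_diffSubfield {L : Type*} [Field L] {m n : ℕ}
    (K : Subfield L) (α : Fin m → (L →+* L)) (w : Fin m → ℕ) (η : Fin n → L)
    (hgen : Subfield.closure ((K : Set L) ∪
      {x | ∃ (k : Fin m → ℕ) (i : Fin n), x = tauApp α k (η i)}) = ⊤) (x : L) :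
    ∃ r, x ∈ diffSubfield K α w η r := by
  have hx : x ∈ Subfield.closure ((K : Set L) ∪
      {x | ∃ (k : Fin m → ℕ) (i : Fin n), x = tauApp α k (η i)}) := by rw [hgen]; trivial
  have hmono := fun {r s : ℕ} (h : r ≤ s) => diffSubfield_mono K α w η h
  induction hx using Subfield.closure_induction with
  | mem x h =>
    rcases h with h | ⟨k, i, rfl⟩
    · exact ⟨0, Subfield.subset_closure (Or.inl h)⟩
    · exact ⟨ordw w k, Subfield.subset_closure (Or.inr ⟨k, i, le_rfl, rfl⟩)⟩
  | one => exact ⟨0, one_mem _⟩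
  | add x y hx hy h1 h2 =>
    obtain ⟨a, ha⟩ := h1
    obtain ⟨b, hb⟩ := h2
    exact ⟨max a b, add_mem (hmono (le_max_left _ _) ha) (hmono (le_max_right _ _) hb)⟩
  | neg x hx h1 => obtain ⟨a, ha⟩ := h1; exact ⟨a, neg_mem ha⟩
  | inv x hx h1 => obtain ⟨a, ha⟩ := h1; exact ⟨a, inv_mem ha⟩
  | mul x y hx hy h1 h2 =>
    obtain ⟨a, ha⟩ := h1
    obtain ⟨b, hb⟩ := h2
    exact ⟨max a b, mul_mem (hmono (le_max_left _ _) ha) (hmono (le_max_right _ _) hb)⟩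

theorem tauApp_mem_diffSubfield {L : Type*} [Field L] {m n : ℕ}
    (K : Subfield L) (α : Fin m → (L →+* L))
    (hcomm : ∀ i j, (α i).comp (α j) = (α j).comp (α i))
    (hK : ∀ i, ∀ x ∈ K, α i x ∈ K) (w : Fin m → ℕ) (η : Fin n → L)
    (r : ℕ) (k : Fin m → ℕ) (x : L) (hx : x ∈ diffSubfield K α w η r) :
    tauApp α k x ∈ diffSubfield K α w η (r + ordw w k) := by
  have h : diffSubfield K α w η r ≤ (diffSubfield K α w η (r + ordw w k)).comap (tauHom α k) := by
    rw [diffSubfield, Subfield.closure_le]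
    rintro y (hy | ⟨l, i, hl, rfl⟩)
    · show tauHom α k y ∈ diffSubfield K α w η (r + ordw w k)
      rw [tauHom_apply]
      exact Subfield.subset_closure (Or.inl (tauApp_mem K α hK k y hy))
    · show tauHom α k (tauApp α l (η i)) ∈ diffSubfield K α w η (r + ordw w k)
      rw [tauHom_apply, ← tauApp_add α hcomm]
      refine Subfield.subset_closure (Or.inr ⟨k + l, i, ?_, rfl⟩)
      rw [ordw_add]
      omega
  rw [← tauHom_apply]
  exact h hx

theorem diffSubfield_subset_closure {L : Type*} [Field L] {m n : ℕ}
    (K : Subfield L) (α : Fin m → (L →+* L)) (w : Fin m → ℕ) (η : Fin n → L) (r : ℕ) (B : Set L)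
    (hB : ∀ k i, ordw w k ≤ r → genFam α η (k, i) ∈ (algMat K).closure B) :
    ((diffSubfield K α w η r : Subfield L) : Set L) ⊆ (algMat K).closure B := by
  apply subfield_closure_subset
  rintro _ ⟨k, i, h, rfl⟩
  exact hB k i h

theorem lower_bound {L : Type*} [Field L] {m n : ℕ}
    (K : Subfield L) (α : Fin m → (L →+* L))
    (hcomm : ∀ i j, (α i).comp (α j) = (α j).comp (α i))
    (hK : ∀ i, ∀ x ∈ K, α i x ∈ K) (w : Fin m → ℕ) (hw : ∀ i, 0 < w i) (η : Fin n → L)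
    (hgen : Subfield.closure ((K : Set L) ∪
      {x | ∃ (k : Fin m → ℕ) (i : Fin n), x = tauApp α k (η i)}) = ⊤)
    (D : ℕ) (b : Fin D → L)
    (hb : AlgebraicIndependent K (fun p : (Fin m → ℕ) × Fin D => tauApp α p.1 (b p.2))) :
    ∃ c, ∀ r, D * (ordBall w r).card ≤ trdegNat K (diffSubfield K α w η (r + c)) := by
  classical
  choose f hf using fun i => exists_mem_diffSubfield K α w η hgen (b i)
  refine ⟨Finset.univ.sup f, fun r => ?_⟩
  have hfin : ((diffSubfield K α w η (r + Finset.univ.sup f) : Subfield L) : Set L) ⊆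
      (algMat K).closure (((ordBall w (r + Finset.univ.sup f) ×ˢ
        (Finset.univ : Finset (Fin n))).image (genFam α η) : Finset L) : Set L) := by
    apply diffSubfield_subset_closure
    intro k i h
    apply (algMat K).mem_closure_of_mem _ (Set.subset_univ _)
    rw [Finset.coe_image]
    exact ⟨(k, i), by simp [mem_ordBall hw, h], rfl⟩
  have := le_trdegNat K _ _ hfin (ordBall w r ×ˢ (Finset.univ : Finset (Fin D))) _ ?_ hb
  · rw [Finset.card_product, Finset.card_univ, Fintype.card_fin] at this
    rwa [mul_comm]
  · rintro ⟨k, i⟩ hki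
    have hk : ordw w k ≤ r := by simpa [mem_ordBall hw] using hki
    have hi : f i ≤ Finset.univ.sup f := Finset.le_sup (Finset.mem_univ i)
    exact diffSubfield_mono K α w η (by omega)
      (tauApp_mem_diffSubfield K α hcomm hK w η (f i) k (b i) (hf i))

open Classical in
theorem count_compl {m : ℕ} (w : Fin m → ℕ) (hw : ∀ i, 0 < w i) (k : Fin m → ℕ) (c r : ℕ)
    (hk : ordw w k ≤ c) (hc : c ≤ r) :
    ((ordBall w r).filter fun l => ¬ k ≤ l).card + (ordBall w (r - c)).card
      ≤ (ordBall w r).card := by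
  rw [← Finset.card_filter_add_card_filter_not (s := ordBall w r) (fun l => k ≤ l),
    add_comm]
  gcongr 1
  apply Finset.card_le_card_of_injOn (fun l => l + k)
  · intro l hl
    have hl' := (mem_ordBall hw).1 hl
    simp only [Finset.coe_filter, Set.mem_ofPred_eq, mem_ordBall hw, ordw_add]
    exact ⟨by omega, le_add_self⟩
  · intro a _ b _ h
    exact add_right_cancel h

theorem upper_bound {L : Type*} [Field L] {m n : ℕ}
    (K : Subfield L) (α : Fin m → (L →+* L))
    (hcomm : ∀ i j, (α i).comp (α j) = (α j).comp (α i))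
    (hK : ∀ i, ∀ x ∈ K, α i x ∈ K) (w : Fin m → ℕ) (hw : ∀ i, 0 < w i) (η : Fin n → L)
    (J : Finset (Fin n))
    (hJ : AlgebraicIndepOn K (genFam α η) {p | p.2 ∈ J})
    (hmax : ∀ j ∉ J, ¬ AlgebraicIndepOn K (genFam α η) {p | p.2 ∈ insert j J}) :
    ∃ a c, ∀ r, c ≤ r → trdegNat K (diffSubfield K α w η r) + n * (ordBall w (r - c)).card
      ≤ J.card * (ordBall w (r + a)).card + n * (ordBall w r).card := by
  classical
  have hex : ∀ j : Fin n, ∃ k c, j ∉ J → genFam α η (k, j) ∈ (algMat K).closure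
      (genFam α η '' ({p | p.2 ∈ J ∧ ordw w p.1 ≤ c}
        ∪ {p | p.2 = j ∧ keyw w p.1 < keyw w k})) := by
    intro j
    by_cases hj : j ∈ J
    · exact ⟨0, 0, fun h => absurd hj h⟩
    · obtain ⟨k, c, h⟩ := exists_leading_bdd K α w η J j hJ (hmax j hj)
      exact ⟨k, c, fun _ => h⟩
  choose kk cc hkc using hex
  set a := Finset.univ.sup cc with ha
  set c := Finset.univ.sup (fun j => ordw w (kk j)) with hc
  refine ⟨a, c, fun r hr => ?_⟩
  let G : Finset ((Fin m → ℕ) × Fin n) := (ordBall w (r + a) ×ˢ J) ∪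
    Finset.univ.biUnion (fun j => ((ordBall w r).filter fun l => ¬ kk j ≤ l) ×ˢ {j})
  have hG : ((diffSubfield K α w η r : Subfield L) : Set L) ⊆
      (algMat K).closure ((G.image (genFam α η) : Finset L) : Set L) := by
    apply diffSubfield_subset_closure
    intro k j h
    rw [Finset.coe_image]
    by_cases hj : j ∈ J
    · apply (algMat K).mem_closure_of_mem _ (Set.subset_univ _)
      refine ⟨(k, j), ?_, rfl⟩
      simp only [G, Finset.coe_union, Set.mem_union, Finset.mem_coe, Finset.mem_product,
        mem_ordBall hw]
      left
      exact ⟨by omega, hj⟩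
    · refine (algMat K).closure_subset_closure (Set.image_mono ?_)
        (spanning_step K α hcomm hK w η J j (kk j) (cc j) (hkc j hj) r k h)
      have hcj : cc j ≤ a := Finset.le_sup (Finset.mem_univ j)
      rintro ⟨l, i⟩ (⟨h1, h2⟩ | ⟨h1, h2, h3⟩)
      · simp only [G, Finset.coe_union, Set.mem_union, Finset.mem_coe, Finset.mem_product,
          mem_ordBall hw]
        left
        exact ⟨h2.trans (by omega), h1⟩
      · simp only [G, Finset.coe_union, Set.mem_union, Finset.mem_coe, Finset.mem_product,
          mem_ordBall hw, Finset.mem_biUnion, Finset.mem_univ, true_and, Finset.mem_filter,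
          Finset.mem_singleton]
        right
        obtain rfl : i = j := h1
        exact ⟨i, ⟨h2, h3⟩, rfl⟩
  have h1 := trdegNat_le K _ _ hG
  have h2 : (G.image (genFam α η)).card ≤ G.card := Finset.card_image_le
  have h3 : G.card ≤ J.card * (ordBall w (r + a)).card
      + ∑ j, ((ordBall w r).filter fun l => ¬ kk j ≤ l).card := by
    refine (Finset.card_union_le _ _).trans ?_
    rw [Finset.card_product, mul_comm]
    gcongr
    refine Finset.card_biUnion_le.trans (le_of_eq ?_)
    apply Finset.sum_congr rfl
    intro j _
    simp
  have h4 : ∑ j, (((ordBall w r).filter fun l => ¬ kk j ≤ l).card + (ordBall w (r - c)).card)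
      ≤ ∑ _j : Fin n, (ordBall w r).card := by
    apply Finset.sum_le_sum
    intro j _
    exact count_compl w hw (kk j) c r
      (Finset.le_sup (f := fun j => ordw w (kk j)) (Finset.mem_univ j)) hr
  rw [Finset.sum_add_distrib] at h4
  simp only [Finset.sum_const, Finset.card_univ, Fintype.card_fin, smul_eq_mul] at h4
  omega

theorem exists_maximal_J {L : Type*} [Field L] {m n : ℕ}
    (K : Subfield L) (α : Fin m → (L →+* L)) (η : Fin n → L) :
    ∃ J : Finset (Fin n), AlgebraicIndepOn K (genFam α η) {p | p.2 ∈ J} ∧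
      ∀ j ∉ J, ¬ AlgebraicIndepOn K (genFam α η) {p | p.2 ∈ insert j J} := by
  classical
  have hne : (Finset.univ.filter fun J : Finset (Fin n) =>
      AlgebraicIndepOn K (genFam α η) {p | p.2 ∈ J}).Nonempty := by
    refine ⟨∅, ?_⟩
    simp only [Finset.mem_filter, Finset.mem_univ, true_and, Finset.notMem_empty,
      Set.ofPred_false]
    have : IsEmpty ((∅ : Set ((Fin m → ℕ) × Fin n)) : Type _) := inferInstance
    exact algebraicIndependent_empty_type_iff.2 (algebraMap K L).injective
  obtain ⟨J, hJ, hmax⟩ := Finset.exists_max_image _ Finset.card hne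
  simp only [Finset.mem_filter, Finset.mem_univ, true_and] at hJ hmax
  refine ⟨J, hJ, fun j hj h => ?_⟩
  have := hmax _ h
  rw [Finset.card_insert_of_notMem hj] at this
  omega

theorem trdeg_tendsto {L : Type*} [Field L] {m n : ℕ}
    (K : Subfield L) (α : Fin m → (L →+* L))
    (hcomm : ∀ i j, (α i).comp (α j) = (α j).comp (α i))
    (hK : ∀ i, ∀ x ∈ K, α i x ∈ K) (w : Fin m → ℕ) (hw : ∀ i, 0 < w i) (η : Fin n → L)
    (hgen : Subfield.closure ((K : Set L) ∪
      {x | ∃ (k : Fin m → ℕ) (i : Fin n), x = tauApp α k (η i)}) = ⊤) :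
    Tendsto (fun r : ℕ => (trdegNat K (diffSubfield K α w η r) : ℚ) / (r : ℚ) ^ m) atTop
      (𝓝 ((sigmaTrdeg K α : ℚ) / ((Nat.factorial m : ℚ) * ∏ j, (w j : ℚ)))) := by
  classical
  obtain ⟨J, hJ, hmax⟩ := exists_maximal_J K α η
  obtain ⟨a, c, hup⟩ := upper_bound K α hcomm hK w hw η J hJ hmax
  set cst : ℚ := (m.factorial : ℚ) * ∏ j, (w j : ℚ) with hcst
  have hc0 : 0 < cst := by
    apply mul_pos (by positivity)
    exact Finset.prod_pos fun i _ => by exact_mod_cast hw i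
  have hJind : AlgebraicIndependent K (fun p : (Fin m → ℕ) × Fin J.card =>
      tauApp α p.1 (η (J.equivFin.symm p.2))) := by
    refine AlgebraicIndependent.comp hJ (fun p : (Fin m → ℕ) × Fin J.card =>
      (⟨(p.1, (J.equivFin.symm p.2 : Fin n)), (J.equivFin.symm p.2).2⟩ :
        {p : (Fin m → ℕ) × Fin n | p.2 ∈ J})) ?_
    intro x y hxy
    have h := congrArg (fun z : {p : (Fin m → ℕ) × Fin n | p.2 ∈ J} => z.1) hxy
    have h1 : x.1 = y.1 := (Prod.mk.inj h).1
    have h2 := (Prod.mk.inj h).2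
    exact Prod.ext h1 (J.equivFin.symm.injective (Subtype.ext h2))
  have hcount := fun f hf => ordBall_card_tendsto w hw f hf
  have hid := hcount (fun r => r) (by simpa using tendsto_shift_add 0)
  set T : ℕ → ℚ := fun r => (trdegNat K (diffSubfield K α w η r) : ℚ) with hT
  -- the upper function
  have hU : Tendsto (fun r : ℕ => (J.card : ℚ) * (((ordBall w (r + a)).card : ℚ) / (r : ℚ) ^ m)
      + n * (((ordBall w r).card : ℚ) / (r : ℚ) ^ m)
      - n * (((ordBall w (r - c)).card : ℚ) / (r : ℚ) ^ m)) atTop (𝓝 ((J.card : ℚ) / cst)) := by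
    have h1 := (((hcount _ (tendsto_shift_add a)).const_mul (J.card : ℚ)).add
      (hid.const_mul (n : ℚ))).sub ((hcount _ (tendsto_shift_sub c)).const_mul (n : ℚ))
    convert h1 using 2
    ring
  have hTU : ∀ᶠ r : ℕ in atTop, T r / (r : ℚ) ^ m ≤
      (J.card : ℚ) * (((ordBall w (r + a)).card : ℚ) / (r : ℚ) ^ m)
      + n * (((ordBall w r).card : ℚ) / (r : ℚ) ^ m)
      - n * (((ordBall w (r - c)).card : ℚ) / (r : ℚ) ^ m) := by
    filter_upwards [eventually_ge_atTop c] with r hr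
    have h1 : (T r) + n * ((ordBall w (r - c)).card : ℚ)
        ≤ J.card * ((ordBall w (r + a)).card : ℚ) + n * ((ordBall w r).card : ℚ) := by
      simp only [hT]
      exact_mod_cast hup r hr
    rw [← mul_div_assoc, ← mul_div_assoc, ← mul_div_assoc, ← add_div, ← sub_div]
    gcongr
    linarith
  -- lower bounds
  have hlow : ∀ (D : ℕ) (b : Fin D → L),
      AlgebraicIndependent K (fun p : (Fin m → ℕ) × Fin D => tauApp α p.1 (b p.2)) →
      ∃ e : ℕ, ∀ᶠ r : ℕ in atTop,
        (D : ℚ) * (((ordBall w (r - e)).card : ℚ) / (r : ℚ) ^ m) ≤ T r / (r : ℚ) ^ m := by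
    intro D b hb
    obtain ⟨e, he⟩ := lower_bound K α hcomm hK w hw η hgen D b hb
    refine ⟨e, ?_⟩
    filter_upwards [eventually_ge_atTop e] with r hr
    have h1 := he (r - e)
    rw [Nat.sub_add_cancel hr] at h1
    rw [← mul_div_assoc]
    gcongr
    simp only [hT]
    exact_mod_cast h1
  have hlim : ∀ (D e : ℕ), Tendsto (fun r : ℕ =>
      (D : ℚ) * (((ordBall w (r - e)).card : ℚ) / (r : ℚ) ^ m)) atTop (𝓝 ((D : ℚ) / cst)) := by
    intro D e
    have h1 := (hcount _ (tendsto_shift_sub e)).const_mul (D : ℚ)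
    rwa [mul_one_div] at h1
  have hsig : sigmaTrdeg K α = J.card := by
    apply IsGreatest.csSup_eq
    refine ⟨⟨fun i => η (J.equivFin.symm i), hJind⟩, ?_⟩
    rintro D ⟨b, hb⟩
    obtain ⟨e, he⟩ := hlow D b hb
    have h1 : (D : ℚ) / cst ≤ (J.card : ℚ) / cst := by
      apply le_of_tendsto_of_tendsto (hlim D e) hU
      filter_upwards [he, hTU] with r h1 h2
      exact h1.trans h2
    have h2 : (D : ℚ) ≤ J.card := (div_le_div_iff_of_pos_right hc0).1 h1
    exact_mod_cast h2
  rw [hsig]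
  obtain ⟨e, he⟩ := hlow J.card (fun i => η (J.equivFin.symm i)) hJind
  exact tendsto_of_tendsto_of_tendsto_of_le_of_le' (hlim _ e) hU he hTU

/-- If `Φ` is a quasi-polynomial of degree at most `m` with `Φ(r) = trdeg_K L_r` for all
sufficiently large `r`, then the coefficient of `t^m` in every constituent polynomial
of `Φ` equals `d/(m!·w₁⋯w_m)` where `d` is the `σ`-transcendence degree of `L/K`. -/
theorem leading_coefficient_eq_sigma_trdeg
    {L : Type*} [Field L] [CharZero L] (K : Subfield L)
    (m n : ℕ) (hm : 0 < m) (α : Fin m → (L →+* L))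
    (hcomm : ∀ i j, (α i).comp (α j) = (α j).comp (α i))
    (hinj : ∀ i, Function.Injective (α i))
    (hK : ∀ i, ∀ x ∈ K, α i x ∈ K)
    (w : Fin m → ℕ) (hw : ∀ i, 0 < w i)
    (η : Fin n → L)
    (hgen : Subfield.closure ((K : Set L) ∪
      {x | ∃ (k : Fin m → ℕ) (i : Fin n), x = tauApp α k (η i)}) = ⊤)
    (q : ℕ) (hq : 0 < q) (g : Fin q → Polynomial ℚ)
    (hdeg : ∀ i : Fin q, (g i).natDegree ≤ m)
    (N : ℕ)
    (hΦ : ∀ r : ℕ, N ≤ r →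
      (trdegNat K (diffSubfield K α w η r) : ℚ)
        = (g ⟨r % q, Nat.mod_lt r hq⟩).eval (r : ℚ)) :
    ∀ i : Fin q, (g i).coeff m
      = (sigmaTrdeg K α : ℚ) / ((Nat.factorial m : ℚ) * ∏ j, (w j : ℚ)) := by
  intro i
  have h1 := trdeg_tendsto K α hcomm hK w hw η hgen
  have hsub : Tendsto (fun t : ℕ => (i : ℕ) + q * t) atTop atTop := by
    apply tendsto_atTop_mono (f := fun t : ℕ => t) _ tendsto_id
    intro t
    have : t ≤ q * t := Nat.le_mul_of_pos_left t hq
    show t ≤ (i : ℕ) + q * t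
    omega
  have h2 := h1.comp hsub
  have h3 := ((poly_tendsto (g i) m (hdeg i)).comp
    (tendsto_natCast_atTop_atTop (R := ℚ))).comp hsub
  refine tendsto_nhds_unique (h3.congr' ?_) h2
  filter_upwards [hsub.eventually_ge_atTop N] with t ht
  have h4 := hΦ _ ht
  have h5 : (⟨((i : ℕ) + q * t) % q, Nat.mod_lt _ hq⟩ : Fin q) = i := by
    apply Fin.ext
    simp [Nat.add_mul_mod_self_left, Nat.mod_eq_of_lt i.2]
  rw [h5] at h4
  simp only [Function.comp_apply]
  rw [h4]
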